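/- arXiv:2504.00377 — 2 statements merged into one kernel-verified Lean document; each statement's English description precedes it below -/
import Mathlib

section
/- Let U, V ⊆ Ω be compact open sets and p, q ∈ ℕ² be such that T^p is injective on U, T^q is injective on V, and T^p(U) = T^q(V); write W = T^p(U). Then the map z ↦ ((T^p|_U)⁻¹(z), p − q, (T^q|_V)⁻¹(z)) is a homeomorphism from W (with its subspace topology from Ω) onto Z(U, p, q, V) (with its subspace topology from G_T). -/
open Set Function

/-- `T^m = T₁^{m₁} ∘ T₂^{m₂}` for `m = (m₁, m₂) ∈ ℕ²`. -/
def Tpow {Ω : Type*} (T₁ T₂ : Ω → Ω) (m : ℕ × ℕ) : Ω → Ω := T₁^[m.1] ∘ T₂^[m.2]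

/-- The rank-2 Deaconu–Renault groupoid
`G_T = ⋃_{m,n ∈ ℕ²} {(x, m − n, y) ∈ Ω × ℤ² × Ω : T^m x = T^n y}`. -/
def DR {Ω : Type*} (T₁ T₂ : Ω → Ω) : Set (Ω × (ℤ × ℤ) × Ω) :=
  {γ | ∃ m n : ℕ × ℕ,
    γ.2.1 = ((m.1 : ℤ) - (n.1 : ℤ), (m.2 : ℤ) - (n.2 : ℤ)) ∧
    Tpow T₁ T₂ m γ.1 = Tpow T₁ T₂ n γ.2.2}

/-- `Z(U, m, n, V) = {(x, m − n, y) : x ∈ U, y ∈ V, T^m x = T^n y}`. -/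
def Zset {Ω : Type*} (T₁ T₂ : Ω → Ω) (U : Set Ω) (m n : ℕ × ℕ) (V : Set Ω) :
    Set (Ω × (ℤ × ℤ) × Ω) :=
  {γ | γ.1 ∈ U ∧ γ.2.2 ∈ V ∧
    γ.2.1 = ((m.1 : ℤ) - (n.1 : ℤ), (m.2 : ℤ) - (n.2 : ℤ)) ∧
    Tpow T₁ T₂ m γ.1 = Tpow T₁ T₂ n γ.2.2}

/-- The topology on `G_T` generated by the sets `Z(U, m, n, V)` with `U, V ⊆ Ω`
compact open and `m, n ∈ ℕ²`. -/
def DRtopology {Ω : Type*} [TopologicalSpace Ω] (T₁ T₂ : Ω → Ω) :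
    TopologicalSpace ↥(DR T₁ T₂) :=
  TopologicalSpace.generateFrom
    {s | ∃ (U V : Set Ω) (m n : ℕ × ℕ), IsCompact U ∧ IsOpen U ∧ IsCompact V ∧ IsOpen V ∧
      s = Subtype.val ⁻¹' Zset T₁ T₂ U m n V}

/-!
The inverse of the map in question is `γ = (x, p - q, y) ↦ T^p x`. It is continuous because the
source map `γ ↦ x` is (`continuous_source`): a totally disconnected locally compact Hausdorff space
has a basis of compact open sets, so each `γ` has arbitrarily source-small neighbourhoods
`Z(U', m, n, V')`.

For the forward direction, `T^p` is a local homeomorphism, hence its restriction to the open set `U`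
is an open embedding, and the local inverses `z ↦ x(z) ∈ U`, `z ↦ y(z) ∈ V` are continuous on `W`
(`exists_continuous_inverse`). The content is that the preimage of a subbasic set `Z(A, m, n, B)`
is open, i.e. that `T^m x(z₀) = T^n y(z₀)` and `m - n = p - q` force `T^m x(z) = T^n y(z)` for `z`
near `z₀`. Since `p + n = m + q` and the `T^k` commute,
`T^p (T^m x(z)) = T^m z = T^p (T^n y(z))`; both `T^m x(z)` and `T^n y(z)` tend to the common value
`T^m x(z₀)`, near which `T^p` is injective, so they agree.
-/

theorem Tpow_add {Ω : Type*} {T₁ T₂ : Ω → Ω} (hcomm : ∀ x, T₁ (T₂ x) = T₂ (T₁ x))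
    (m n : ℕ × ℕ) (x : Ω) :
    Tpow T₁ T₂ (m + n) x = Tpow T₁ T₂ m (Tpow T₁ T₂ n x) := by
  have hc : Function.Commute T₁ T₂ := hcomm
  simp only [Tpow, Function.comp_apply, Prod.fst_add, Prod.snd_add, Function.iterate_add_apply]
  rw [(hc.iterate_iterate n.1 m.2).eq]

theorem isLocalHomeomorph_iterate {X : Type*} [TopologicalSpace X] {f : X → X}
    (hf : IsLocalHomeomorph f) (n : ℕ) : IsLocalHomeomorph f^[n] := by
  induction n with
  | zero => exact (Homeomorph.refl X).isLocalHomeomorph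
  | succ n ih => exact ih.comp hf

theorem isLocalHomeomorph_Tpow {Ω : Type*} [TopologicalSpace Ω] {T₁ T₂ : Ω → Ω}
    (hl₁ : IsLocalHomeomorph T₁) (hl₂ : IsLocalHomeomorph T₂) (m : ℕ × ℕ) :
    IsLocalHomeomorph (Tpow T₁ T₂ m) :=
  (isLocalHomeomorph_iterate hl₁ m.1).comp (isLocalHomeomorph_iterate hl₂ m.2)

/-- A local homeomorphism that is injective on an open set `U` has a continuous inverse
`f '' U → U`. -/
theorem exists_continuous_inverse {X Y : Type*} [TopologicalSpace X] [TopologicalSpace Y]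
    {f : X → Y} (hf : IsLocalHomeomorph f) {U : Set X} (hU : IsOpen U) (hi : Set.InjOn f U)
    {W : Set Y} (hW : f '' U = W) :
    ∃ g : W → X, Continuous g ∧ ∀ z, g z ∈ U ∧ f (g z) = z := by
  have he : Topology.IsOpenEmbedding (U.domRestrict f) :=
    .of_continuous_injective_isOpenMap (hf.continuous.comp continuous_subtype_val)
      hi.injective (hf.isOpenMap.comp hU.isOpenMap_subtype_val)
  have hr : Set.range (U.domRestrict f) = W := by rw [Set.range_domRestrict, hW]
  subst hr
  let e := he.isEmbedding.toHomeomorph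
  exact ⟨fun z => (e.symm z : X), continuous_subtype_val.comp e.symm.continuous, fun z =>
    ⟨(e.symm z).2, congrArg Subtype.val (e.apply_symm_apply z)⟩⟩

theorem continuous_source {Ω : Type*} [TopologicalSpace Ω] [TotallyDisconnectedSpace Ω]
    [LocallyCompactSpace Ω] [T2Space Ω] (T₁ T₂ : Ω → Ω) :
    letI : TopologicalSpace ↥(DR T₁ T₂) := DRtopology T₁ T₂
    Continuous (fun γ : ↥(DR T₁ T₂) => (γ : Ω × (ℤ × ℤ) × Ω).1) := by
  let _ : TopologicalSpace ↥(DR T₁ T₂) := DRtopology T₁ T₂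
  have key : ∀ (x : Ω) (A : Set Ω), IsOpen A → x ∈ A →
      ∃ C : Set Ω, IsCompact C ∧ IsOpen C ∧ x ∈ C ∧ C ⊆ A := by
    intro x A hA hx
    obtain ⟨K, hK, hxK, hKA⟩ := exists_compact_subset hA hx
    obtain ⟨C, hC, hxC, hCK⟩ :=
      (loc_compact_Haus_tot_disc_of_zero_dim (H := Ω)).mem_nhds_iff.1
        (isOpen_interior.mem_nhds hxK)
    exact ⟨C, hK.of_isClosed_subset hC.1 (hCK.trans interior_subset), hC.2, hxC,
      hCK.trans (interior_subset.trans hKA)⟩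
  refine continuous_def.2 fun A hA => isOpen_iff_mem_nhds.2 fun γ hγ => ?_
  obtain ⟨m, n, hmn, he⟩ := γ.2
  obtain ⟨C, hCc, hCo, hxC, hCA⟩ := key _ A hA hγ
  obtain ⟨D, hDc, hDo, hyD, -⟩ := key γ.1.2.2 Set.univ isOpen_univ trivial
  have ho : IsOpen (Subtype.val ⁻¹' Zset T₁ T₂ C m n D : Set ↥(DR T₁ T₂)) :=
    TopologicalSpace.isOpen_generateFrom_of_mem ⟨C, D, m, n, hCc, hCo, hDc, hDo, rfl⟩
  exact Filter.mem_of_superset (ho.mem_nhds ⟨hxC, hyD, hmn, he⟩) fun δ hδ => hCA hδ.1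

/-- Let `U, V ⊆ Ω` be compact open sets and `p, q ∈ ℕ²` such that `T^p`
is injective on `U`, `T^q` is injective on `V`, and `T^p(U) = T^q(V)`; write
`W = T^p(U)`.  Then `z ↦ ((T^p|_U)⁻¹ z, p − q, (T^q|_V)⁻¹ z)` is a homeomorphism from
`W` (with its subspace topology from `Ω`) onto `Z(U, p, q, V)` (with its subspace
topology from `G_T`). -/
theorem stmt4 {Ω : Type*} [TopologicalSpace Ω] [SecondCountableTopology Ω]
    [TotallyDisconnectedSpace Ω] [LocallyCompactSpace Ω] [T2Space Ω]
    (T₁ T₂ : Ω → Ω)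
    (hs₁ : Function.Surjective T₁) (hs₂ : Function.Surjective T₂)
    (hl₁ : IsLocalHomeomorph T₁) (hl₂ : IsLocalHomeomorph T₂)
    (hcomm : ∀ x, T₁ (T₂ x) = T₂ (T₁ x))
    (U V : Set Ω) (p q : ℕ × ℕ)
    (hUc : IsCompact U) (hUo : IsOpen U) (hVc : IsCompact V) (hVo : IsOpen V)
    (hpU : Set.InjOn (Tpow T₁ T₂ p) U) (hqV : Set.InjOn (Tpow T₁ T₂ q) V)
    (hW : Tpow T₁ T₂ p '' U = Tpow T₁ T₂ q '' V) :
    letI : TopologicalSpace ↥(DR T₁ T₂) := DRtopology T₁ T₂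
    ∃ φ : ↥(Tpow T₁ T₂ p '' U) ≃ₜ
        ↥{γ : ↥(DR T₁ T₂) | (γ : Ω × (ℤ × ℤ) × Ω) ∈ Zset T₁ T₂ U p q V},
      ∀ z : ↥(Tpow T₁ T₂ p '' U),
        (((φ z : ↥(DR T₁ T₂)) : Ω × (ℤ × ℤ) × Ω).1 ∈ U ∧
          Tpow T₁ T₂ p (((φ z : ↥(DR T₁ T₂)) : Ω × (ℤ × ℤ) × Ω).1) = (z : Ω)) ∧
        (((φ z : ↥(DR T₁ T₂)) : Ω × (ℤ × ℤ) × Ω).2.2 ∈ V ∧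
          Tpow T₁ T₂ q (((φ z : ↥(DR T₁ T₂)) : Ω × (ℤ × ℤ) × Ω).2.2) = (z : Ω)) ∧
        ((φ z : ↥(DR T₁ T₂)) : Ω × (ℤ × ℤ) × Ω).2.1 =
          ((p.1 : ℤ) - (q.1 : ℤ), (p.2 : ℤ) - (q.2 : ℤ)) := by
  let _ : TopologicalSpace ↥(DR T₁ T₂) := DRtopology T₁ T₂
  have hT := isLocalHomeomorph_Tpow hl₁ hl₂
  obtain ⟨g, hgc, hg⟩ := exists_continuous_inverse (hT p) hUo hpU rfl
  obtain ⟨h, hhc, hh⟩ := exists_continuous_inverse (hT q) hVo hqV hW.symm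
  let F : ↥(Tpow T₁ T₂ p '' U) → ↥(DR T₁ T₂) := fun z =>
    ⟨(g z, ((p.1 : ℤ) - (q.1 : ℤ), (p.2 : ℤ) - (q.2 : ℤ)), h z),
      p, q, rfl, (hg z).2.trans (hh z).2.symm⟩
  have hF : Continuous F := by
    refine continuous_generateFrom_iff.2 ?_
    rintro _ ⟨A, B, m, n, -, hA, -, hB, rfl⟩
    refine isOpen_iff_mem_nhds.2 fun z₀ hz₀ => ?_
    obtain ⟨hA₀, hB₀, hd, he⟩ := hz₀
    have hd' : p + n = m + q := by
      have h1 := congrArg Prod.fst hd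
      have h2 := congrArg Prod.snd hd
      simp only [F] at h1 h2
      ext <;> simp only [Prod.fst_add, Prod.snd_add] <;> omega
    -- `T^p` is injective on a neighbourhood `N` of the common value `T^m x(z₀) = T^n y(z₀)`.
    obtain ⟨e, hx₀, hep⟩ := hT p (Tpow T₁ T₂ m (g z₀))
    let N := e.source
    have hN : IsOpen N := e.open_source
    have hgm : Continuous fun z => Tpow T₁ T₂ m (g z) := (hT m).continuous.comp hgc
    have hhn : Continuous fun z => Tpow T₁ T₂ n (h z) := (hT n).continuous.comp hhc
    have he' : Tpow T₁ T₂ m (g z₀) = Tpow T₁ T₂ n (h z₀) := he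
    filter_upwards [(hA.preimage hgc).mem_nhds hA₀, (hB.preimage hhc).mem_nhds hB₀,
      (hN.preimage hgm).mem_nhds hx₀,
      (hN.preimage hhn).mem_nhds (show Tpow T₁ T₂ n (h z₀) ∈ N from he' ▸ hx₀)]
      with z hzA hzB hzm hzn
    refine ⟨hzA, hzB, hd, e.injOn hzm hzn ?_⟩
    rw [← hep]
    change Tpow T₁ T₂ p (Tpow T₁ T₂ m (g z)) = Tpow T₁ T₂ p (Tpow T₁ T₂ n (h z))
    rw [← Tpow_add hcomm, ← Tpow_add hcomm, hd', add_comm p m, Tpow_add hcomm, Tpow_add hcomm,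
      (hg z).2, (hh z).2]
  refine ⟨{ toFun := fun z => ⟨F z, (hg z).1, (hh z).1, rfl, (hg z).2.trans (hh z).2.symm⟩
            invFun := fun γ => ⟨Tpow T₁ T₂ p γ.1.1.1, _, γ.2.1, rfl⟩
            left_inv := fun z => Subtype.ext (hg z).2
            right_inv := ?_
            continuous_toFun := hF.subtype_mk _
            continuous_invFun := ?_ }, fun z => ⟨hg z, hh z, rfl⟩⟩
  · rintro ⟨⟨⟨x, d, y⟩, hγ⟩, hx, hy, hd, hxy⟩
    refine Subtype.ext (Subtype.ext (Prod.ext ?_ (Prod.ext hd.symm ?_)))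
    · exact hpU (hg _).1 hx (hg _).2
    · exact hqV (hh _).1 hy ((hh _).2.trans hxy)
  · exact Continuous.subtype_mk ((hT p).continuous.comp
      ((continuous_source T₁ T₂).comp continuous_subtype_val)) _
end

section
/- Let U ⊆ Ω be a compact open set and let p ∈ ℕ² be such that T^p is injective on U. Then 1_U − 1_{T^p(U)} belongs to the subgroup {(1 − (T₁)_*)f + (1 − (T₂)_*)g : f, g ∈ C_c(Ω, ℤ)} of C_c(Ω, ℤ). -/
/-!
If `T` is injective on a compact open set `V`, then `T_* 1_V = 1_{T(V)}`, so
`1_V - 1_{T(V)} = (1 - T_*) 1_V` (`Tstar_indicator`). Since `T_*` is additive on compactly supported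
functions (the fibres of a local homeomorphism are discrete, `finite_fibre_inter_support`), these
differences telescope along `V, T(V), T²(V), …`, giving `1_V - 1_{Tⁿ(V)} = (1 - T_*) f` whenever
`Tⁿ` is injective on `V` (`exists_coboundary`). The result follows by applying this to `T₂` and `U`,
then to `T₁` and `T₂^{p₂}(U)`.
-/

open Set Function

/-- `(T_* h)(y) = Σ_{x : T x = y} h(x)` (a `finsum`, which is `0` if the sum is not
finitely supported). -/
noncomputable def Tstar {X Y : Type*} (T : X → Y) (h : X → ℤ) : Y → ℤ :=
  fun y => ∑ᶠ x ∈ T ⁻¹' {y}, h x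

/-- A local homeomorphism has discrete fibres, so a compactly supported function is nonzero at only
finitely many points of each fibre; hence the `finsum` defining `Tstar` is a genuine sum. -/
theorem finite_fibre_inter_support {Ω : Type*} [TopologicalSpace Ω] [T1Space Ω]
    {T : Ω → Ω} (hT : IsLocalHomeomorph T) {f : Ω → ℤ} (hf : HasCompactSupport f) (y : Ω) :
    (T ⁻¹' {y} ∩ support f).Finite := by
  have hK : IsCompact (tsupport f ∩ T ⁻¹' {y}) :=
    IsCompact.inter_right hf (isClosed_singleton.preimage hT.continuous)
  refine Set.Finite.subset (hK.finite ?_) fun x hx => ⟨subset_tsupport f hx.2, hx.1⟩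
  rw [isDiscrete_iff_forall_mem_exists_isOpen]
  rintro x ⟨hx, hxy⟩
  obtain ⟨e, hxe, rfl⟩ := hT x
  refine ⟨e.source, e.open_source, ?_⟩
  ext z
  constructor
  · rintro ⟨hz, -, hzy⟩
    exact e.injOn hz hxe (hzy.trans hxy.symm)
  · rintro rfl
    exact ⟨hxe, hx, hxy⟩

theorem Tstar_add {Ω : Type*} [TopologicalSpace Ω] [T1Space Ω]
    {T : Ω → Ω} (hT : IsLocalHomeomorph T) {f g : Ω → ℤ}
    (hf : HasCompactSupport f) (hg : HasCompactSupport g) :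
    Tstar T (f + g) = Tstar T f + Tstar T g := by
  funext y
  exact finsum_mem_add_distrib' (finite_fibre_inter_support hT hf y)
    (finite_fibre_inter_support hT hg y)

theorem Tstar_indicator {X Y : Type*} {T : X → Y} {V : Set X} (hV : InjOn T V) :
    Tstar T (indicator V 1) = indicator (T '' V) 1 := by
  funext y
  unfold Tstar
  by_cases hy : y ∈ T '' V
  · obtain ⟨x, hx, rfl⟩ := hy
    have h : ∑ᶠ z ∈ T ⁻¹' {T x}, indicator V (1 : X → ℤ) z
        = ∑ᶠ z ∈ ({x} : Set X), indicator V (1 : X → ℤ) z := by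
      refine finsum_mem_inter_support_eq' _ _ _ fun z hz => ?_
      have hzV : z ∈ V := mem_of_indicator_ne_zero hz
      exact ⟨fun h => hV hzV hx h, fun h => congrArg T h⟩
    rw [h, finsum_mem_singleton, indicator_of_mem hx, indicator_of_mem (mem_image_of_mem T hx)]
    rfl
  · rw [indicator_of_notMem hy]
    refine finsum_mem_eq_zero_of_forall_eq_zero fun z hz => ?_
    exact indicator_of_notMem (fun hzV => hy ⟨z, hzV, hz⟩) _

theorem isOpenMap_iterate {X : Type*} [TopologicalSpace X] {T : X → X} (hT : IsOpenMap T) (n : ℕ) :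
    IsOpenMap T^[n] := by
  induction n with
  | zero => exact IsOpenMap.id
  | succ n ih => exact ih.comp hT

/-- The difference `1_V - 1_{Tⁿ(V)}` is of the form `(1 - T_*) f` for a single map `T`. -/
theorem exists_coboundary {Ω : Type*} [TopologicalSpace Ω] [T2Space Ω]
    {T : Ω → Ω} (hT : IsLocalHomeomorph T) (n : ℕ) :
    ∀ V : Set Ω, IsCompact V → IsOpen V → InjOn T^[n] V →
      ∃ f : Ω → ℤ, Continuous f ∧ HasCompactSupport f ∧
        indicator V 1 - indicator (T^[n] '' V) 1 = f - Tstar T f := by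
  induction n with
  | zero =>
    intro V _ _ _
    refine ⟨0, continuous_const, HasCompactSupport.zero, ?_⟩
    funext y
    simp [Tstar]
  | succ n ih =>
    intro V hVc hVo hV
    rw [iterate_succ] at hV ⊢
    have hV₁ : InjOn T V := hV.of_comp
    obtain ⟨f, hf, hfc, hfe⟩ := ih (T '' V) (hVc.image hT.continuous)
      (hT.isOpenMap V hVo) hV.image_of_comp
    have hcont : Continuous (indicator V (1 : Ω → ℤ)) :=
      IsClopen.continuous_indicator ⟨hVc.isClosed, hVo⟩ continuous_one
    have hcs : HasCompactSupport (indicator V (1 : Ω → ℤ)) :=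
      HasCompactSupport.intro hVc fun x hx => indicator_of_notMem hx _
    refine ⟨indicator V 1 + f, hcont.add hf, hcs.add hfc, ?_⟩
    rw [Tstar_add hT hcs hfc, Tstar_indicator hV₁, image_comp,
      add_sub_add_comm, ← hfe, sub_add_sub_cancel]

/-- Let `U ⊆ Ω` be a compact open set and `p ∈ ℕ²` such that `T^p` is
injective on `U`.  Then `1_U − 1_{T^p(U)}` belongs to the subgroup
`{(1 − (T₁)_*) f + (1 − (T₂)_*) g : f, g ∈ C_c(Ω, ℤ)}` of `C_c(Ω, ℤ)`. -/
theorem stmt8 {Ω : Type*} [TopologicalSpace Ω] [SecondCountableTopology Ω]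
    [TotallyDisconnectedSpace Ω] [LocallyCompactSpace Ω] [T2Space Ω]
    (T₁ T₂ : Ω → Ω)
    (hs₁ : Function.Surjective T₁) (hs₂ : Function.Surjective T₂)
    (hl₁ : IsLocalHomeomorph T₁) (hl₂ : IsLocalHomeomorph T₂)
    (hcomm : ∀ x, T₁ (T₂ x) = T₂ (T₁ x))
    (U : Set Ω) (hUc : IsCompact U) (hUo : IsOpen U)
    (p : ℕ × ℕ) (hinj : Set.InjOn (Tpow T₁ T₂ p) U) :
    ∃ f g : Ω → ℤ, Continuous f ∧ HasCompactSupport f ∧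
      Continuous g ∧ HasCompactSupport g ∧
      Set.indicator U 1 - Set.indicator (Tpow T₁ T₂ p '' U) 1 =
        (f - Tstar T₁ f) + (g - Tstar T₂ g) := by
  have hinj₂ : InjOn T₂^[p.2] U := InjOn.of_comp hinj
  have hinj₁ : InjOn T₁^[p.1] (T₂^[p.2] '' U) := InjOn.image_of_comp hinj
  obtain ⟨g, hg, hgc, hge⟩ := exists_coboundary hl₂ p.2 U hUc hUo hinj₂
  obtain ⟨f, hf, hfc, hfe⟩ := exists_coboundary hl₁ p.1 (T₂^[p.2] '' U)
    (hUc.image (hl₂.continuous.iterate p.2)) (isOpenMap_iterate hl₂.isOpenMap p.2 U hUo) hinj₁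
  refine ⟨f, g, hf, hfc, hg, hgc, ?_⟩
  rw [← hfe, ← hge, Tpow, image_comp]
  abel
end
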